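/- Let h, s, q be positive real numbers, let φ, Δ₁, Δ₂ be real numbers, and let ψ, η, Δ₃, Δ₄, Δ₅, Δ₆ be real numbers with Δ₅ > 0, Δ₆ > 0 and 0 < Δ₅ < η. For α ∈ [0,1] define TC_L(α) = qh/2 + (s/q)·((φ−Δ₁)+Δ₁α) + (qh/2)·((ψ−Δ₃)+Δ₃α)/((η+Δ₆)−Δ₆α) and TC_U(α) = qh/2 + (s/q)·((φ+Δ₂)−Δ₂α) + (qh/2)·((ψ+Δ₄)−Δ₄α)/((η−Δ₅)+Δ₅α). Then (1/2)·∫₀¹ (TC_L(α) + TC_U(α)) dα = qh/2 + (s/q)·(φ + (Δ₂−Δ₁)/4) + (qh/2)·(1/2)·{ ((ψΔ₆+ηΔ₃)/Δ₆²)·log((η+Δ₆)/η) + ((ψΔ₅+ηΔ₄)/Δ₅²)·log(η/(η−Δ₅)) − Δ₃/Δ₆ − Δ₄/Δ₅ }. -/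

import Mathlib

/-!
The signed distance is affine in the pair of α-cut end-points, so the cost splits into a constant,
the triangular demand `φ̃`, and the fuzzy ratio `ψ̃ / η̃`. The end-points of the ratio are quotients
of affine functions `(p + m x) / (u + v x) = m / v + ((p v - m u) / v) / (u + v x)`, and integrating
the second summand produces the logarithms.
-/

open MeasureTheory Set
open scoped Interval

section AffineQuotient

variable {p m u v a b x : ℝ}

theorem hasDerivAt_affine_div_affine_primitive (hv : v ≠ 0) (hx : u + v * x ≠ 0) :
    HasDerivAt (fun y => m / v * y + (p * v - m * u) / v ^ 2 * Real.log (u + v * y))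
      ((p + m * x) / (u + v * x)) x := by
  have hid := hasDerivAt_id' x
  have hlog := ((hid.const_mul v).const_add u).log hx
  refine ((hid.const_mul (m / v)).add
    (hlog.const_mul ((p * v - m * u) / v ^ 2))).congr_deriv ?_
  field_simp
  ring

theorem intervalIntegrable_affine_div_affine (hne : ∀ x ∈ [[a, b]], u + v * x ≠ 0) :
    IntervalIntegrable (fun x => (p + m * x) / (u + v * x)) volume a b := by
  apply ContinuousOn.intervalIntegrable
  fun_prop (disch := assumption)

theorem integral_affine_div_affine (hv : v ≠ 0) (hne : ∀ x ∈ [[a, b]], u + v * x ≠ 0) :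
    ∫ x in a..b, (p + m * x) / (u + v * x) =
      m / v * (b - a) + (p * v - m * u) / v ^ 2 * Real.log ((u + v * b) / (u + v * a)) := by
  rw [intervalIntegral.integral_eq_sub_of_hasDerivAt
      (fun x hx => hasDerivAt_affine_div_affine_primitive hv (hne x hx))
      (intervalIntegrable_affine_div_affine hne),
    Real.log_div (hne b right_mem_uIcc) (hne a left_mem_uIcc)]
  ring

end AffineQuotient

/-- The left end-point of the `α`-cut of a triangular fuzzy number with peak `c` and left
spread `δ`. -/
def triangularLower (c δ α : ℝ) : ℝ := (c - δ) + δ * α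

/-- The right end-point of the `α`-cut of a triangular fuzzy number with peak `c` and right
spread `δ`. -/
def triangularUpper (c δ α : ℝ) : ℝ := (c + δ) - δ * α

section Triangular

variable {b c γ δ α : ℝ}

theorem triangularUpper_eq_triangularLower_neg (c δ : ℝ) :
    triangularUpper c δ = triangularLower c (-δ) := by
  ext α
  simp only [triangularUpper, triangularLower]
  ring

theorem triangularLower_pos (hc : 0 < c) (hδ : δ < c) (hα : α ∈ [[(0 : ℝ), 1]]) :
    0 < triangularLower c δ α := by
  rw [uIcc_of_le zero_le_one] at hα
  have hconvex : 0 < (1 - α) • (c - δ) + α • c :=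
    convex_Ioi (0 : ℝ) (sub_pos.2 hδ) hc (sub_nonneg.2 hα.2) hα.1 (sub_add_cancel 1 α)
  calc 0 < (1 - α) • (c - δ) + α • c := hconvex
    _ = triangularLower c δ α := by simp only [smul_eq_mul, triangularLower]; ring

theorem intervalIntegrable_triangularLower (c δ : ℝ) :
    IntervalIntegrable (triangularLower c δ) volume 0 1 := by
  apply Continuous.intervalIntegrable
  unfold triangularLower
  fun_prop

theorem integral_triangularLower (c δ : ℝ) :
    ∫ α in (0 : ℝ)..1, triangularLower c δ α = c - δ / 2 := by
  simp only [triangularLower]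
  rw [intervalIntegral.integral_add intervalIntegrable_const
      (intervalIntegral.intervalIntegrable_id.const_mul δ),
    intervalIntegral.integral_const, intervalIntegral.integral_const_mul, integral_id, smul_eq_mul]
  ring

theorem intervalIntegrable_triangularLower_div (hc : 0 < c) (hδ : δ < c) :
    IntervalIntegrable (fun α => triangularLower b γ α / triangularLower c δ α) volume 0 1 :=
  intervalIntegrable_affine_div_affine fun _ hα => (triangularLower_pos hc hδ hα).ne'

theorem integral_triangularLower_div (hδ₀ : δ ≠ 0) (hc : 0 < c) (hδ : δ < c) :
    ∫ α in (0 : ℝ)..1, triangularLower b γ α / triangularLower c δ α =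
      (b * δ - c * γ) / δ ^ 2 * Real.log (c / (c - δ)) + γ / δ := by
  simp only [triangularLower]
  rw [integral_affine_div_affine hδ₀ fun _ hα => (triangularLower_pos hc hδ hα).ne']
  simp only [mul_zero, add_zero, mul_one, sub_zero, sub_add_cancel]
  ring

end Triangular

/-- The signed distance to `0̃` of a fuzzy number whose `α`-cut is `[L α, U α]`, which
defuzzifies it to a real number. -/
noncomputable def signedDistance (L U : ℝ → ℝ) : ℝ :=
  (1 / 2) * ∫ α in (0 : ℝ)..1, (L α + U α)

section SignedDistance

variable {L U L₁ U₁ L₂ U₂ : ℝ → ℝ}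

theorem signedDistance_eq_integral_add_integral (hL : IntervalIntegrable L volume 0 1)
    (hU : IntervalIntegrable U volume 0 1) :
    signedDistance L U = (1 / 2) * ((∫ α in (0 : ℝ)..1, L α) + ∫ α in (0 : ℝ)..1, U α) := by
  rw [signedDistance, intervalIntegral.integral_add hL hU]

theorem signedDistance_const_add_mul_add_mul (c k l : ℝ)
    (hL₁ : IntervalIntegrable L₁ volume 0 1) (hU₁ : IntervalIntegrable U₁ volume 0 1)
    (hL₂ : IntervalIntegrable L₂ volume 0 1) (hU₂ : IntervalIntegrable U₂ volume 0 1) :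
    signedDistance (fun α => c + k * L₁ α + l * L₂ α) (fun α => c + k * U₁ α + l * U₂ α) =
      c + k * signedDistance L₁ U₁ + l * signedDistance L₂ U₂ := by
  have hsum₁ := (hL₁.add hU₁).const_mul k
  have hsum₂ := (hL₂.add hU₂).const_mul l
  have hregroup : ∀ α, (c + k * L₁ α + l * L₂ α) + (c + k * U₁ α + l * U₂ α) =
      2 * c + k * (L₁ α + U₁ α) + l * (L₂ α + U₂ α) := fun α => by ring
  simp only [signedDistance, hregroup]
  rw [intervalIntegral.integral_add (intervalIntegrable_const.add hsum₁) hsum₂,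
    intervalIntegral.integral_add intervalIntegrable_const hsum₁,
    intervalIntegral.integral_const, intervalIntegral.integral_const_mul,
    intervalIntegral.integral_const_mul, smul_eq_mul]
  ring

theorem signedDistance_triangular (c δ ε : ℝ) :
    signedDistance (triangularLower c δ) (triangularUpper c ε) = c + (ε - δ) / 4 := by
  rw [triangularUpper_eq_triangularLower_neg,
    signedDistance_eq_integral_add_integral (intervalIntegrable_triangularLower c δ)
      (intervalIntegrable_triangularLower c (-ε)),
    integral_triangularLower, integral_triangularLower]
  ring

theorem signedDistance_triangular_div {b c γ₁ γ₂ δ₁ δ₂ : ℝ} (hc : 0 < c)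
    (hδ₁ : δ₁ ≠ 0) (hδ₁c : δ₁ < c) (hδ₂ : δ₂ ≠ 0) (hδ₂c : -δ₂ < c) :
    signedDistance (fun α => triangularLower b γ₁ α / triangularUpper c δ₂ α)
        (fun α => triangularUpper b γ₂ α / triangularLower c δ₁ α) =
      (1 / 2) * ((b * δ₂ + c * γ₁) / δ₂ ^ 2 * Real.log ((c + δ₂) / c)
        + (b * δ₁ + c * γ₂) / δ₁ ^ 2 * Real.log (c / (c - δ₁)) - γ₁ / δ₂ - γ₂ / δ₁) := by
  have hlog : Real.log (c / (c - -δ₂)) = -Real.log ((c + δ₂) / c) := by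
    rw [sub_neg_eq_add, ← Real.log_inv, inv_div]
  simp only [triangularUpper_eq_triangularLower_neg]
  rw [signedDistance_eq_integral_add_integral (intervalIntegrable_triangularLower_div hc hδ₂c)
      (intervalIntegrable_triangularLower_div hc hδ₁c),
    integral_triangularLower_div (neg_ne_zero.2 hδ₂) hc hδ₂c,
    integral_triangularLower_div hδ₁ hc hδ₁c, hlog, neg_sq, div_neg, neg_div]
  ring

end SignedDistance

theorem stmt_9 (h s q φ Δ₁ Δ₂ ψ η Δ₃ Δ₄ Δ₅ Δ₆ : ℝ)
    (hh : 0 < h) (hs : 0 < s) (hq : 0 < q)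
    (hΔ₅ : 0 < Δ₅) (hΔ₆ : 0 < Δ₆) (hη : Δ₅ < η) :
    (1/2) * ∫ α in (0:ℝ)..1,
        ((q * h / 2 + (s / q) * ((φ - Δ₁) + Δ₁ * α)
            + (q * h / 2) * (((ψ - Δ₃) + Δ₃ * α) / ((η + Δ₆) - Δ₆ * α)))
          + (q * h / 2 + (s / q) * ((φ + Δ₂) - Δ₂ * α)
            + (q * h / 2) * (((ψ + Δ₄) - Δ₄ * α) / ((η - Δ₅) + Δ₅ * α)))) =
      q * h / 2 + (s / q) * (φ + (Δ₂ - Δ₁) / 4)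
        + (q * h / 2) * ((1/2) * (((ψ * Δ₆ + η * Δ₃) / Δ₆ ^ 2) * Real.log ((η + Δ₆) / η)
            + ((ψ * Δ₅ + η * Δ₄) / Δ₅ ^ 2) * Real.log (η / (η - Δ₅))
            - Δ₃ / Δ₆ - Δ₄ / Δ₅)) := by
  have hη₀ : 0 < η := hΔ₅.trans hη
  have hΔ₆η : -Δ₆ < η := (neg_lt_zero.2 hΔ₆).trans hη₀
  have hdemandU : IntervalIntegrable (triangularUpper φ Δ₂) volume 0 1 := by
    simpa only [triangularUpper_eq_triangularLower_neg]
      using intervalIntegrable_triangularLower φ (-Δ₂)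
  have hratioL : IntervalIntegrable
      (fun α => triangularLower ψ Δ₃ α / triangularUpper η Δ₆ α) volume 0 1 := by
    simpa only [triangularUpper_eq_triangularLower_neg]
      using intervalIntegrable_triangularLower_div hη₀ hΔ₆η
  have hratioU : IntervalIntegrable
      (fun α => triangularUpper ψ Δ₄ α / triangularLower η Δ₅ α) volume 0 1 := by
    simpa only [triangularUpper_eq_triangularLower_neg]
      using intervalIntegrable_triangularLower_div hη₀ hη
  rw [← signedDistance_triangular, ← signedDistance_triangular_div hη₀ hΔ₅.ne' hη hΔ₆.ne' hΔ₆η]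
  exact signedDistance_const_add_mul_add_mul (q * h / 2) (s / q) (q * h / 2)
    (intervalIntegrable_triangularLower φ Δ₁) hdemandU hratioL hratioU
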